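/- arXiv:1807.07135 — 3 statements merged into one kernel-verified Lean document; each statement's English description precedes it below -/
import Mathlib

section
/- Let K be a field, let V be a finite-dimensional K-vector space of dimension d, and let V = W₀ ⊇ W₁ ⊇ ⋯ ⊇ W_N = {0} be a decreasing chain of linear subspaces with W₀ = V and W_N = {0}. For every basis s₁, …, s_d of V, one has Σ_{i=1}^{d} ord(s_i) ≤ Σ_{b=1}^{N−1} dim_K W_b. -/
/-- Let `K` be a field, `V` a finite-dimensional `K`-vector space of
dimension `d`, and `V = W 0 ⊇ W 1 ⊇ ⋯ ⊇ W N = {0}` a decreasing chain of subspaces.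
For a nonzero vector `v`, its order is `ord v = max {b ∈ {0,…,N-1} : v ∈ W b}`
(formalized via `sSup`). For every basis `s 1, …, s d` of `V` one has
`∑ i ord (s i) ≤ ∑_{b=1}^{N-1} dim W b`. -/
theorem basis_sum_ord_le {K V : Type*} [Field K] [AddCommGroup V] [Module K V]
    [FiniteDimensional K V] (d N : ℕ)
    (W : ℕ → Submodule K V) (hW : Antitone W)
    (h0 : W 0 = ⊤) (hN : W N = ⊥)
    (s : Module.Basis (Fin d) K V) :
    ∑ i : Fin d, sSup {b : ℕ | b < N ∧ s i ∈ W b} ≤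
      ∑ b ∈ Finset.Ico 1 N, Module.finrank K (W b) := by
  classical
  have h1 : ∀ i : Fin d, sSup {b : ℕ | b < N ∧ s i ∈ W b} ≤
      ∑ b ∈ Finset.Ico 1 N, if s i ∈ W b then 1 else 0 := by
    intro i
    rcases Set.eq_empty_or_nonempty {b : ℕ | b < N ∧ s i ∈ W b} with he | hne
    · rw [he]; simp
    · have hm := Nat.sSup_mem hne ⟨N, fun b hb => hb.1.le⟩
      generalize sSup {b : ℕ | b < N ∧ s i ∈ W b} = m at hm
      obtain ⟨hmN, hmW⟩ := hm
      rw [← Finset.card_filter]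
      calc m = (Finset.Ico 1 (m + 1)).card := by simp
        _ ≤ _ := by
          apply Finset.card_le_card
          intro b hb
          rw [Finset.mem_Ico] at hb
          rw [Finset.mem_filter, Finset.mem_Ico]
          exact ⟨⟨hb.1, by omega⟩, hW (by omega : b ≤ m) hmW⟩
  refine (Finset.sum_le_sum fun i _ => h1 i).trans ?_
  rw [Finset.sum_comm]
  refine Finset.sum_le_sum fun b _ => ?_
  rw [← Finset.card_filter, ← Fintype.card_subtype]
  have hli : LinearIndependent K (fun i : {i : Fin d // s i ∈ W b} => (⟨s i.1, i.2⟩ : W b)) := by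
    apply LinearIndependent.of_comp (W b).subtype
    exact s.linearIndependent.comp (fun i : {i : Fin d // s i ∈ W b} => i.1)
      Subtype.val_injective
  exact hli.fintype_card_le_finrank
end

section
/- Let a, b, m, m′, B be real numbers with 0 < b < m′ ≤ m and a + m − b ≤ 1. If B ≤ (m/(m−b))·(1−a) − b, then B − m ≤ (m′/(m′−b))·(1−(a+m−b)) − b. -/
/-- Let `a, b, m, m′, B` be real numbers with `0 < b < m′ ≤ m` and
`a + m − b ≤ 1`. If `B ≤ (m/(m−b))·(1−a) − b`, then
`B − m ≤ (m′/(m′−b))·(1−(a+m−b)) − b`. -/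
theorem inductive_step_inequality (a b m m' B : ℝ) (hb : 0 < b) (hbm' : b < m')
    (hm'm : m' ≤ m) (ha : a + m - b ≤ 1)
    (hB : B ≤ m / (m - b) * (1 - a) - b) :
    B - m ≤ m' / (m' - b) * (1 - (a + m - b)) - b := by
  have h1 : 0 < m' - b := by linarith
  have h2 : 0 < m - b := by linarith
  have h3 : m / (m - b) ≤ m' / (m' - b) := by
    rw [div_le_div_iff₀ h2 h1]
    nlinarith
  have h4 : m / (m - b) * (m - b) = m := div_mul_cancel₀ m h2.ne'
  have h5 := mul_le_mul_of_nonneg_right h3 (by linarith : 0 ≤ 1 - (a + m - b))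
  have h6 : m / (m - b) * (1 - (a + m - b))
      = m / (m - b) * (1 - a) - m / (m - b) * (m - b) := by ring
  linarith
end

section
/- Let P, Q ∈ ℂ[x,y] be homogeneous polynomials of degree 2, and set F(s,t,x,y) := s·P(x,y) + t·Q(x,y). Assume that there is no point (s,t,x,y) ∈ ℂ⁴ with (s,t) ≠ (0,0) and (x,y) ≠ (0,0) at which all four partial derivatives ∂F/∂s, ∂F/∂t, ∂F/∂x, ∂F/∂y vanish simultaneously (i.e., the bidegree (1,2) curve {F = 0} ⊂ ℙ¹×ℙ¹ is smooth). Then there exist invertible linear substitutions (s,t) ↦ (αs + βt, γs + δt) with αδ − βγ ≠ 0 and (x,y) ↦ (a·x + b·y, c·x + d·y) with ad − bc ≠ 0 transforming F into the polynomial s·y² − t·x². -/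
open MvPolynomial

theorem aux_coeffs (P : MvPolynomial (Fin 2) ℂ) (hP : P.IsHomogeneous 2) :
    ∃ p q r : ℂ, ∀ x y : ℂ, eval ![x, y] P = p * x ^ 2 + q * (x * y) + r * y ^ 2 := by
  have key : ∀ S : Finset (Fin 2 →₀ ℕ), (∀ d ∈ S, d 0 + d 1 = 2) →
      ∃ p q r : ℂ, ∀ x y : ℂ, ∑ d ∈ S, coeff d P * ∏ i, (![x, y] : Fin 2 → ℂ) i ^ d i
        = p * x ^ 2 + q * (x * y) + r * y ^ 2 := by
    intro S
    induction S using Finset.induction_on with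
    | empty => intro _; exact ⟨0, 0, 0, by simp⟩
    | insert e S he ih =>
      intro h
      obtain ⟨p, q, r, hpqr⟩ := ih (fun d hd => h d (Finset.mem_insert_of_mem hd))
      have h2 := h e (Finset.mem_insert_self _ _)
      have h3 : (e 0 = 0 ∧ e 1 = 2) ∨ (e 0 = 1 ∧ e 1 = 1) ∨ (e 0 = 2 ∧ e 1 = 0) := by omega
      rcases h3 with ⟨h0, h1⟩ | ⟨h0, h1⟩ | ⟨h0, h1⟩
      · refine ⟨p, q, r + coeff e P, fun x y => ?_⟩
        rw [Finset.sum_insert he, hpqr]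
        simp [Fin.prod_univ_two, h0, h1]; ring
      · refine ⟨p, q + coeff e P, r, fun x y => ?_⟩
        rw [Finset.sum_insert he, hpqr]
        simp [Fin.prod_univ_two, h0, h1]; ring
      · refine ⟨p + coeff e P, q, r, fun x y => ?_⟩
        rw [Finset.sum_insert he, hpqr]
        simp [Fin.prod_univ_two, h0, h1]; ring
  obtain ⟨p, q, r, h⟩ := key P.support (by
    intro d hd
    have := hP (mem_support_iff.mp hd)
    rw [Finsupp.weight_apply, Finsupp.sum_fintype _ _ (by simp)] at this
    simpa [Fin.sum_univ_two] using this)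
  exact ⟨p, q, r, fun x y => by rw [eval_eq', h]⟩

theorem aux_sqrt (z : ℂ) : ∃ w : ℂ, w ^ 2 = z := IsAlgClosed.exists_pow_nat_eq z two_pos

theorem aux_roots (A B C : ℂ) (h : B ^ 2 - 4 * A * C ≠ 0) :
    ∃ s t u v : ℂ, A * s ^ 2 + B * (s * t) + C * t ^ 2 = 0 ∧
      A * u ^ 2 + B * (u * v) + C * v ^ 2 = 0 ∧ s * v - u * t ≠ 0 := by
  obtain ⟨w, hw⟩ := aux_sqrt (B ^ 2 - 4 * A * C)
  by_cases hA : A = 0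
  · subst hA
    refine ⟨1, 0, -C, B, by ring, by ring, ?_⟩
    intro h'
    apply h
    have : B = 0 := by linear_combination h'
    rw [this]; ring
  · refine ⟨-B + w, 2 * A, -B - w, 2 * A, by linear_combination A * hw,
      by linear_combination A * hw, ?_⟩
    have hw0 : w ≠ 0 := by
      rintro rfl
      exact h (by rw [← hw]; ring)
    have : (-B + w) * (2 * A) - (-B - w) * (2 * A) = 4 * A * w := by ring
    rw [this]
    exact mul_ne_zero (mul_ne_zero (by norm_num) hA) hw0

theorem aux_square (p q r : ℂ) (h : q ^ 2 = 4 * p * r) :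
    ∃ l m : ℂ, l ^ 2 = p ∧ 2 * l * m = q ∧ m ^ 2 = r := by
  by_cases hp : p = 0
  · subst hp
    obtain ⟨m, hm⟩ := aux_sqrt r
    have : q = 0 := by
      have : q ^ 2 = 0 := by rw [h]; ring
      simpa using this
    exact ⟨0, m, by ring, by rw [this]; ring, hm⟩
  · obtain ⟨l, hl⟩ := aux_sqrt p
    have hl0 : l ≠ 0 := by rintro rfl; exact hp (by rw [← hl]; ring)
    refine ⟨l, q / (2 * l), hl, by field_simp, ?_⟩
    rw [div_pow, h, ← hl]
    field_simp
    ring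

theorem aux_root (p q r : ℂ) : ∃ x y : ℂ, (x, y) ≠ (0, 0) ∧
    p * x ^ 2 + q * (x * y) + r * y ^ 2 = 0 := by
  by_cases hp : p = 0
  · exact ⟨1, 0, by simp, by rw [hp]; ring⟩
  · obtain ⟨w, hw⟩ := aux_sqrt (q ^ 2 - 4 * p * r)
    exact ⟨-q + w, 2 * p, by simp [hp], by linear_combination p * hw⟩

theorem aux_res (p q r p' q' r' : ℂ)
    (h : ∀ x y : ℂ, (x, y) ≠ (0, 0) → p * x ^ 2 + q * (x * y) + r * y ^ 2 = 0 →
      p' * x ^ 2 + q' * (x * y) + r' * y ^ 2 = 0 → False) :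
    (p * r' - r * p') ^ 2 - (p * q' - q * p') * (q * r' - r * q') ≠ 0 := by
  intro hR
  obtain ⟨x, y, hx, hxy, hy⟩ := aux_square (q * r' - r * q') (-2 * (p * r' - r * p'))
    (p * q' - q * p') (by linear_combination 4 * hR)
  have hxy' : x * y = -(p * r' - r * p') := by linear_combination hxy / 2
  by_cases h0 : (x, y) = (0, 0)
  · simp only [Prod.mk.injEq] at h0
    obtain ⟨rfl, rfl⟩ := h0
    by_cases hz : p = 0 ∧ q = 0 ∧ r = 0
    · obtain ⟨rfl, rfl, rfl⟩ := hz
      obtain ⟨x, y, hne, hz⟩ := aux_root p' q' r'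
      exact h x y hne (by ring) hz
    · obtain ⟨x, y, hne, hz'⟩ := aux_root p q r
      refine h x y hne hz' ?_
      by_contra hc
      apply hz
      refine ⟨?_, ?_, ?_⟩
      · refine (mul_eq_zero.mp (?_ : p * _ = 0)).resolve_right hc
        linear_combination p' * hz' - x * y * hy + y ^ 2 * hxy'
      · refine (mul_eq_zero.mp (?_ : q * _ = 0)).resolve_right hc
        linear_combination q' * hz' + x ^ 2 * hy - y ^ 2 * hx
      · refine (mul_eq_zero.mp (?_ : r * _ = 0)).resolve_right hc
        linear_combination r' * hz' - x ^ 2 * hxy' + x * y * hx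
  · refine h x y h0 ?_ ?_
    · rw [hx, hxy', hy]; ring
    · rw [hx, hxy', hy]; ring

theorem aux_deriv (f : ℂ → ℂ) (A B C x : ℂ) (h : ∀ u, f u = A * u ^ 2 + B * u + C) :
    deriv f x = 2 * A * x + B := by
  have : f = fun u => A * u ^ 2 + B * u + C := funext h
  rw [this]
  have h1 : HasDerivAt (fun u : ℂ => A * u ^ 2 + B * u + C) (A * (2 * x) + B * 1) x := by
    have := (((hasDerivAt_pow 2 x).const_mul A).add ((hasDerivAt_id x).const_mul B)).add_const C
    simpa using this
  rw [h1.deriv]; ring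

/-- Let `P, Q ∈ ℂ[x,y]` be homogeneous of degree 2 and set
`F(s,t,x,y) = s·P(x,y) + t·Q(x,y)`. If there is no point `(s,t,x,y)` with
`(s,t) ≠ (0,0)` and `(x,y) ≠ (0,0)` at which all four partial derivatives of `F`
vanish simultaneously (i.e. the bidegree `(1,2)` curve `{F = 0} ⊂ ℙ¹×ℙ¹` is smooth),
then there are invertible linear substitutions in `(s,t)` and in `(x,y)`
transforming `F` into `s·y² − t·x²`. -/
theorem normal_form_of_smooth_bidegree_one_two (P Q : MvPolynomial (Fin 2) ℂ)
    (hP : P.IsHomogeneous 2) (hQ : Q.IsHomogeneous 2)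
    (F : ℂ → ℂ → ℂ → ℂ → ℂ)
    (hF : ∀ s t x y : ℂ, F s t x y = s * eval ![x, y] P + t * eval ![x, y] Q)
    (hsmooth : ¬ ∃ s t x y : ℂ, (s, t) ≠ (0, 0) ∧ (x, y) ≠ (0, 0) ∧
      deriv (fun u => F u t x y) s = 0 ∧
      deriv (fun u => F s u x y) t = 0 ∧
      deriv (fun u => F s t u y) x = 0 ∧
      deriv (fun u => F s t x u) y = 0) :
    ∃ α β γ δ a b c d : ℂ, α * δ - β * γ ≠ 0 ∧ a * d - b * c ≠ 0 ∧
      ∀ s t x y : ℂ,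
        F (α * s + β * t) (γ * s + δ * t) (a * x + b * y) (c * x + d * y) =
          s * y ^ 2 - t * x ^ 2 := by
  obtain ⟨p, q, r, hp⟩ := aux_coeffs P hP
  obtain ⟨p', q', r', hq⟩ := aux_coeffs Q hQ
  simp only [hp, hq] at hF
  have hres := aux_res p q r p' q' r' (by
    intro x y hne h1 h2
    apply hsmooth
    have ex : ∃ s t : ℂ, (s, t) ≠ (0, 0) ∧ s * (2 * p * x + q * y) + t * (2 * p' * x + q' * y) = 0
        ∧ s * (q * x + 2 * r * y) + t * (q' * x + 2 * r' * y) = 0 := by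
      by_cases hx : x = 0
      · have hy : y ≠ 0 := by rintro rfl; simp [hx] at hne
        subst hx
        have hr : r = 0 := by simpa [hy] using h1
        have hr' : r' = 0 := by simpa [hy] using h2
        by_cases hz : q = 0
        · exact ⟨1, 0, by simp, by rw [hz]; ring, by rw [hr]; ring⟩
        · exact ⟨q', -q, by simp [hz], by ring, by rw [hr, hr']; ring⟩
      · by_cases hz : q * x + 2 * r * y = 0
        · refine ⟨1, 0, by simp, ?_, by rw [hz]; ring⟩
          refine (mul_eq_zero.mp (?_ : x * _ = 0)).resolve_left hx
          linear_combination 2 * h1 - y * hz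
        · refine ⟨q' * x + 2 * r' * y, -(q * x + 2 * r * y), by simp [-neg_add_rev, hz], ?_, by ring⟩
          refine (mul_eq_zero.mp (?_ : x * _ = 0)).resolve_left hx
          linear_combination 2 * (q' * x + 2 * r' * y) * h1 - 2 * (q * x + 2 * r * y) * h2
    obtain ⟨s, t, hst, e1, e2⟩ := ex
    refine ⟨s, t, x, y, hst, hne, ?_, ?_, ?_, ?_⟩
    · rw [aux_deriv _ 0 (p * x ^ 2 + q * (x * y) + r * y ^ 2)
        (t * (p' * x ^ 2 + q' * (x * y) + r' * y ^ 2)) s (fun u => by rw [hF]; ring)]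
      linear_combination h1
    · rw [aux_deriv _ 0 (p' * x ^ 2 + q' * (x * y) + r' * y ^ 2)
        (s * (p * x ^ 2 + q * (x * y) + r * y ^ 2)) t (fun u => by rw [hF]; ring)]
      linear_combination h2
    · rw [aux_deriv _ (s * p + t * p') (s * q * y + t * q' * y)
        (s * r * y ^ 2 + t * r' * y ^ 2) x (fun u => by rw [hF]; ring)]
      linear_combination e1
    · rw [aux_deriv _ (s * r + t * r') (s * q * x + t * q' * x)
        (s * p * x ^ 2 + t * p' * x ^ 2) y (fun u => by rw [hF]; ring)]
      linear_combination e2)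
  obtain ⟨α, γ, β, δ, z1, z2, hdet⟩ := aux_roots (q ^ 2 - 4 * p * r)
    (2 * q * q' - 4 * p * r' - 4 * p' * r) (q' ^ 2 - 4 * p' * r') (by
      intro h; apply hres; linear_combination h / 16)
  obtain ⟨l1, m1, a1, a2, a3⟩ := aux_square (α * p + γ * p') (α * q + γ * q') (α * r + γ * r')
    (by linear_combination z1)
  obtain ⟨l2, m2, b1, b2, b3⟩ := aux_square (-(β * p + δ * p')) (-(β * q + δ * q'))
    (-(β * r + δ * r')) (by linear_combination z2)
  have hD : l2 * m1 - m2 * l1 ≠ 0 := by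
    intro hD
    have e : (α * δ - β * γ) ^ 2 *
      ((p * r' - r * p') ^ 2 - (p * q' - q * p') * (q * r' - r * q')) =
      (l2 * m1 - m2 * l1) ^ 4 := by
      have : (α * δ - β * γ) ^ 2 *
        ((p * r' - r * p') ^ 2 - (p * q' - q * p') * (q * r' - r * q')) =
        ((α * p + γ * p') * (-(β * r + δ * r')) - (α * r + γ * r') * (-(β * p + δ * p'))) ^ 2
        - ((α * p + γ * p') * (-(β * q + δ * q')) - (α * q + γ * q') * (-(β * p + δ * p')))
        * ((α * q + γ * q') * (-(β * r + δ * r')) - (α * r + γ * r') * (-(β * q + δ * q'))) := by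
        ring
      rw [this, ← a1, ← a2, ← a3, ← b1, ← b2, ← b3]; ring
    rw [hD] at e
    exact mul_ne_zero (pow_ne_zero 2 hdet) hres (by rw [e]; ring)
  refine ⟨α, β, γ, δ, m1 / (l2 * m1 - m2 * l1), -m2 / (l2 * m1 - m2 * l1),
    -l1 / (l2 * m1 - m2 * l1), l2 / (l2 * m1 - m2 * l1), hdet, ?_, ?_⟩
  · have : m1 / (l2 * m1 - m2 * l1) * (l2 / (l2 * m1 - m2 * l1)) -
      -m2 / (l2 * m1 - m2 * l1) * (-l1 / (l2 * m1 - m2 * l1)) = 1 / (l2 * m1 - m2 * l1) := by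
      field_simp
      try ring
    rw [this]
    exact one_div_ne_zero hD
  · intro s t x y
    rw [hF]
    generalize hX : m1 / (l2 * m1 - m2 * l1) * x + -m2 / (l2 * m1 - m2 * l1) * y = X
    generalize hY : -l1 / (l2 * m1 - m2 * l1) * x + l2 / (l2 * m1 - m2 * l1) * y = Y
    have hi := mul_inv_cancel₀ hD
    have f1 : l1 * X + m1 * Y = y := by
      rw [← hX, ← hY]; linear_combination y * hi
    have f2 : l2 * X + m2 * Y = x := by
      rw [← hX, ← hY]; linear_combination x * hi
    rw [← f1, ← f2]
    linear_combination -s * (X ^ 2 * a1 + X * Y * a2 + Y ^ 2 * a3) +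
      t * (X ^ 2 * b1 + X * Y * b2 + Y ^ 2 * b3)
end
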